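/- arXiv:2507.02015 — 2 statements merged into one kernel-verified Lean document; each statement's English description precedes it below -/
import Mathlib

section
/- For all n ≥ 2 and m ≥ 1, there is a Marcello step from the disjoint union K_n ⊔ K_m of two complete graphs to the complete graph on its n + m vertices; since K_n ⊔ K_m is not complete, ϖ(K_n ∪ K_m) = 1. -/
open SimpleGraph

attribute [local instance] Classical.propDecidable

/-- The degree of a vertex. -/
noncomputable def mdeg {V : Type*} (G : SimpleGraph V) (v : V) : ℕ :=
  (G.neighborSet v).ncard

/-- `G'` is obtained from `G` by a Marcello step. -/
def MarcelloStep {V : Type*} [Fintype V] (G G' : SimpleGraph V) : Prop :=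
  G ≤ G' ∧ ∃ f : Sym2 V → V,
    (∀ e ∈ G'.edgeSet \ G.edgeSet, f e ∈ e) ∧
    (∀ v : V, (∃ e ∈ G'.edgeSet \ G.edgeSet, f e = v) →
        0 < mdeg G v ∧ mdeg G v < Fintype.card V - 1) ∧
    (∀ v : V, ((G'.edgeSet \ G.edgeSet) ∩ {e | f e = v}).ncard ≤ mdeg G v)

/-- There is a Marcello chain of length `k` from `G` to `H`. -/
def MarcelloChain {V : Type*} [Fintype V] (G H : SimpleGraph V) (k : ℕ) : Prop :=
  ∃ c : ℕ → SimpleGraph V, c 0 = G ∧ c k = H ∧ ∀ i < k, MarcelloStep (c i) (c (i + 1))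

/-- The Marcello number `ϖ(G)`. -/
noncomputable def marcelloNumber {V : Type*} [Fintype V] (G : SimpleGraph V) : ℕ :=
  sInf {k | MarcelloChain G (⊤ : SimpleGraph V) k}

/-- The sum of degrees over vertices `v` with `0 < deg v < n - 1`. -/
noncomputable def marcelloSum {V : Type*} [Fintype V] (G : SimpleGraph V) : ℕ :=
  ∑ v ∈ Finset.univ.filter
      (fun v => 0 < mdeg G v ∧ mdeg G v < Fintype.card V - 1), mdeg G v

/-!
An initiator of a new edge misses the other endpoint of that edge, so it is never universal; and
if it initiates at most as many new edges as its degree, that degree is positive. Hence only the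
bound on the number of initiated edges matters. For `K_V ⊔ K_W` the new edges are the pairs in
`V × W`, where every `v : V` may initiate `|V| - 1` of them and every `w : W` may initiate
`|W| - 1`. If one side is larger, it initiates everything. If `|V| = |W| ≥ 2`, take a bijection
`V ≃ W`: each `w` initiates its matching edge, and each `v` the other `|W| - 1` edges at `v`.
-/

section Step

variable {V : Type*} [Fintype V] {G G' : SimpleGraph V}

theorem mdeg_eq_degree (G : SimpleGraph V) (v : V) : mdeg G v = G.degree v := by
  rw [mdeg, Set.ncard_eq_toFinset_card', ← neighborFinset_def, card_neighborFinset_eq_degree]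

theorem mdeg_top (v : V) : mdeg (⊤ : SimpleGraph V) v = Fintype.card V - 1 := by
  rw [mdeg_eq_degree, degree_eq_card_sub_one]
  exact fun _ => id

theorem mdeg_lt_card_sub_one_of_mem_new_edge {v : V} {e : Sym2 V}
    (he : e ∈ G'.edgeSet \ G.edgeSet) (hv : v ∈ e) : mdeg G v < Fintype.card V - 1 := by
  rw [mdeg_eq_degree, degree_lt_card_sub_one]
  intro huniv
  obtain ⟨w, rfl⟩ := hv
  exact he.2 (huniv (G'.ne_of_adj he.1))

theorem marcelloStep_of_ncard_le (hGG' : G ≤ G') (f : Sym2 V → V)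
    (hmem : ∀ e ∈ G'.edgeSet \ G.edgeSet, f e ∈ e)
    (hcard : ∀ v, ((G'.edgeSet \ G.edgeSet) ∩ {e | f e = v}).ncard ≤ mdeg G v) :
    MarcelloStep G G' := by
  refine ⟨hGG', f, hmem, ?_, hcard⟩
  rintro _ ⟨e, he, rfl⟩
  have initiated_pos : 0 < ((G'.edgeSet \ G.edgeSet) ∩ {e' | f e' = f e}).ncard :=
    (Set.ncard_pos).mpr ⟨e, he, rfl⟩
  exact ⟨initiated_pos.trans_le (hcard (f e)),
    mdeg_lt_card_sub_one_of_mem_new_edge he (hmem e he)⟩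

theorem marcelloStep_of_range_eq {ι : Type*} {edge : ι → Sym2 V} (hGG' : G ≤ G')
    (hedge : Function.Injective edge) (hrange : G'.edgeSet \ G.edgeSet = Set.range edge)
    (initiator : ι → V) (hmem : ∀ i, initiator i ∈ edge i)
    (hcard : ∀ v, {i | initiator i = v}.ncard ≤ mdeg G v) : MarcelloStep G G' := by
  let f : Sym2 V → V := Function.extend edge initiator fun e => e.out.1
  have f_edge (i : ι) : f (edge i) = initiator i := hedge.extend_apply _ _ i
  refine marcelloStep_of_ncard_le hGG' f ?_ fun v => ?_
  · rw [hrange]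
    rintro _ ⟨i, rfl⟩
    rw [f_edge]
    exact hmem i
  · have initiated_eq : Set.range edge ∩ {e | f e = v} = edge '' {i | initiator i = v} := by
      rw [← Set.image_preimage_eq_range_inter]
      simp only [Set.preimage_ofPred_eq, f_edge]
    rw [hrange, initiated_eq, Set.ncard_image_of_injective _ hedge]
    exact hcard v

end Step

section Number

variable {V : Type*} [Fintype V] {G H : SimpleGraph V}

theorem marcelloChain_zero_iff : MarcelloChain G H 0 ↔ G = H := by
  refine ⟨fun ⟨c, hG, hH, _⟩ => hG.symm.trans hH, fun h => ⟨fun _ => G, rfl, h, ?_⟩⟩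
  simp

theorem MarcelloStep.marcelloChain_one (h : MarcelloStep G H) : MarcelloChain G H 1 := by
  refine ⟨fun i => if i = 0 then G else H, rfl, rfl, fun i hi => ?_⟩
  obtain rfl : i = 0 := Nat.lt_one_iff.mp hi
  exact h

theorem marcelloNumber_eq_one (hG : G ≠ ⊤) (hstep : MarcelloStep G ⊤) :
    marcelloNumber G = 1 := by
  have chain_one : MarcelloChain G ⊤ 1 := hstep.marcelloChain_one
  have chain_min : MarcelloChain G ⊤ (marcelloNumber G) :=
    Nat.sInf_mem (s := {k | MarcelloChain G ⊤ k}) ⟨1, chain_one⟩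
  have number_ne_zero : marcelloNumber G ≠ 0 := fun h =>
    hG (marcelloChain_zero_iff.mp (h ▸ chain_min))
  exact le_antisymm (Nat.sInf_le chain_one) (Nat.one_le_iff_ne_zero.mpr number_ne_zero)

end Number

section Sum

variable {V W : Type*} (G : SimpleGraph V) (H : SimpleGraph W)

theorem mdeg_sum_inl (v : V) : mdeg (G ⊕g H) (Sum.inl v) = mdeg G v := by
  rw [mdeg, neighborSet_sum_inl, Set.ncard_image_of_injective _ Sum.inl_injective, mdeg]

theorem mdeg_sum_inr (w : W) : mdeg (G ⊕g H) (Sum.inr w) = mdeg H w := by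
  rw [mdeg, neighborSet_sum_inr, Set.ncard_image_of_injective _ Sum.inr_injective, mdeg]

theorem sum_ne_top [Nonempty V] [Nonempty W] : G ⊕g H ≠ ⊤ := fun h =>
  not_preconnected_sum (h ▸ preconnected_top)

theorem disjoint_sum_completeBipartiteGraph :
    Disjoint (G ⊕g H) (completeBipartiteGraph V W) := by
  rw [disjoint_left]
  rintro (_ | _) (_ | _) <;> simp

theorem top_sum_top_sup_completeBipartiteGraph :
    ((⊤ : SimpleGraph V) ⊕g (⊤ : SimpleGraph W)) ⊔ completeBipartiteGraph V W = ⊤ := by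
  ext (_ | _) (_ | _) <;> simp

theorem edgeSet_sum_sup_completeBipartiteGraph_diff :
    ((G ⊕g H) ⊔ completeBipartiteGraph V W).edgeSet \ (G ⊕g H).edgeSet =
      Set.range fun p : V × W => s(Sum.inl p.1, Sum.inr p.2) := by
  rw [edgeSet_sup, Set.union_sdiff_left, ← edgeSet_completeBipartiteGraph, sdiff_eq_left,
    disjoint_edgeSet]
  exact (disjoint_sum_completeBipartiteGraph G H).symm

variable [Fintype V] [Fintype W]

theorem marcelloStep_sum_sup_completeBipartiteGraph (leftInitiates : V → W → Prop)
    (hleft : ∀ v, {w | leftInitiates v w}.ncard ≤ mdeg G v)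
    (hright : ∀ w, {v | ¬ leftInitiates v w}.ncard ≤ mdeg H w) :
    MarcelloStep (G ⊕g H) ((G ⊕g H) ⊔ completeBipartiteGraph V W) := by
  let initiator (p : V × W) : V ⊕ W :=
    if leftInitiates p.1 p.2 then Sum.inl p.1 else Sum.inr p.2
  have edge_injective :
      Function.Injective fun p : V × W => s((Sum.inl p.1 : V ⊕ W), Sum.inr p.2) := by
    rintro ⟨v, w⟩ ⟨v', w'⟩ h
    simpa using h
  refine marcelloStep_of_range_eq le_sup_left edge_injective
    (edgeSet_sum_sup_completeBipartiteGraph_diff G H) initiator (fun p => ?_) ?_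
  · unfold initiator
    split_ifs <;> simp
  · rintro (v | w)
    · have fiber_inl : {p | initiator p = Sum.inl v} = Prod.mk v '' {w | leftInitiates v w} := by
        ext ⟨v', w⟩
        grind
      rw [fiber_inl, Set.ncard_image_of_injective _ (Prod.mk_right_injective v), mdeg_sum_inl]
      exact hleft v
    · have fiber_inr :
          {p | initiator p = Sum.inr w} = (Prod.mk · w) '' {v | ¬ leftInitiates v w} := by
        ext ⟨v, w'⟩
        grind
      rw [fiber_inr, Set.ncard_image_of_injective _ (Prod.mk_left_injective w), mdeg_sum_inr]
      exact hright w

end Sum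

section CompleteSum

variable {V W : Type*} [Fintype V] [Fintype W]

theorem exists_rel_ncard_le_card_sub_one (h : Fintype.card V + Fintype.card W ≠ 2) :
    ∃ r : V → W → Prop, (∀ v, {w | r v w}.ncard ≤ Fintype.card V - 1) ∧
      ∀ w, {v | ¬ r v w}.ncard ≤ Fintype.card W - 1 := by
  rcases lt_trichotomy (Fintype.card W) (Fintype.card V) with hWV | hWV | hVW
  · refine ⟨fun _ _ => True, fun v => ?_, fun w => ?_⟩
    · simpa using Nat.le_sub_one_of_lt hWV
    · simp
  · let φ : V ≃ W := (Fintype.equivOfCardEq hWV).symm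
    refine ⟨fun v w => w ≠ φ v, fun v => ?_, fun w => ?_⟩
    · have compl_eq : {w | w ≠ φ v} = {φ v}ᶜ := rfl
      rw [compl_eq, Set.ncard_compl, Set.ncard_singleton, Nat.card_eq_fintype_card, hWV]
    · have preimage_eq : {v | ¬ w ≠ φ v} = {φ.symm w} := by
        ext v
        simp [Equiv.eq_symm_apply, eq_comm]
      have card_pos : 0 < Fintype.card W := Fintype.card_pos_iff.mpr ⟨w⟩
      rw [preimage_eq, Set.ncard_singleton]
      omega
  · refine ⟨fun _ _ => False, fun v => ?_, fun w => ?_⟩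
    · simp
    · simpa using Nat.le_sub_one_of_lt hVW

theorem marcelloStep_top_sum_top (h : Fintype.card V + Fintype.card W ≠ 2) :
    MarcelloStep ((⊤ : SimpleGraph V) ⊕g (⊤ : SimpleGraph W)) ⊤ := by
  obtain ⟨r, hleft, hright⟩ := exists_rel_ncard_le_card_sub_one h
  rw [← top_sum_top_sup_completeBipartiteGraph]
  exact marcelloStep_sum_sup_completeBipartiteGraph ⊤ ⊤ r
    (fun v => (hleft v).trans_eq (mdeg_top v).symm)
    (fun w => (hright w).trans_eq (mdeg_top w).symm)

theorem marcello_completeSum_general [Nonempty V] [Nonempty W]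
    (h : Fintype.card V + Fintype.card W ≠ 2) :
    MarcelloStep ((⊤ : SimpleGraph V) ⊕g (⊤ : SimpleGraph W)) ⊤ ∧
      marcelloNumber ((⊤ : SimpleGraph V) ⊕g (⊤ : SimpleGraph W)) = 1 :=
  have hstep := marcelloStep_top_sum_top h
  ⟨hstep, marcelloNumber_eq_one (sum_ne_top ⊤ ⊤) hstep⟩

end CompleteSum

/-- For `n ≥ 2`, `m ≥ 1`, one Marcello step completes `K_n ⊔ K_m`, and `ϖ(K_n ∪ K_m) = 1`. -/
theorem marcello_completeSum (n m : ℕ) (hn : 2 ≤ n) (hm : 1 ≤ m) :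
    MarcelloStep ((⊤ : SimpleGraph (Fin n)) ⊕g (⊤ : SimpleGraph (Fin m)))
        (⊤ : SimpleGraph (Fin n ⊕ Fin m)) ∧
      marcelloNumber ((⊤ : SimpleGraph (Fin n)) ⊕g (⊤ : SimpleGraph (Fin m))) = 1 := by
  have : NeZero n := ⟨by omega⟩
  have : NeZero m := ⟨by omega⟩
  exact marcello_completeSum_general (by simp only [Fintype.card_fin]; omega)
end

section
/- Fix n ≥ 2. For every k ∈ ℕ there exists m ∈ ℕ such that there is no Marcello chain of length at most k from the disjoint union P_n ⊔ N_m (the path on n vertices together with m isolated vertices) to the complete graph on its n + m vertices; consequently ϖ(P_n ∪ N_m) → ∞ as m → ∞. -/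
open SimpleGraph

attribute [local instance] Classical.propDecidable

/-! The number of edges is the whole story. In one step a vertex initiates at most as many edges as
its degree, so by the handshake lemma a graph with `e` edges gains at most `2 * e` new ones, and `e`
at most triples. Isolated vertices leave the initial `e` unchanged, while the number of edges of the
complete graph grows without bound with the number of isolated vertices. -/

open Filter

theorem sub_le_choose_succ (n r : ℕ) : n - r ≤ n.choose (r + 1) := by
  induction n with
  | zero => simp
  | succ n ih =>
    obtain hrn | hnr := le_or_gt r n
    · have hpos : 0 < n.choose r := Nat.choose_pos hrn
      rw [Nat.choose_succ_succ']
      omega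
    · simp [Nat.sub_eq_zero_of_le (Nat.succ_le_of_lt hnr)]

theorem tendsto_choose_succ_atTop (r : ℕ) :
    Tendsto (fun n : ℕ ↦ n.choose (r + 1)) atTop atTop :=
  tendsto_atTop_mono (sub_le_choose_succ · r) (tendsto_sub_atTop_nat r)

section EdgeCount

variable {V W : Type*}

theorem sum_mdeg_eq_two_mul_ncard_edgeSet [Fintype V] (G : SimpleGraph V) :
    ∑ v, mdeg G v = 2 * G.edgeSet.ncard := by
  simpa only [mdeg, ← Set.fintypeCard_eq_ncard, card_neighborSet_eq_degree, ← edgeFinset_card]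
    using G.sum_degrees_eq_twice_card_edges

theorem ncard_edgeSet_top [Fintype V] :
    (⊤ : SimpleGraph V).edgeSet.ncard = (Fintype.card V).choose 2 := by
  rw [← Set.fintypeCard_eq_ncard, ← edgeFinset_card, card_edgeFinset_top_eq_card_choose_two]

theorem ncard_edgeSet_sum_bot (G : SimpleGraph V) :
    (G ⊕g (⊥ : SimpleGraph W)).edgeSet.ncard = G.edgeSet.ncard := by
  have : IsEmpty (⊥ : SimpleGraph W).edgeSet := by simp
  exact Nat.card_congr (edgeSetSumEquiv.trans (Equiv.sumEmpty _ _))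

end EdgeCount

section EdgeGrowth

variable {V : Type*} [Fintype V] {G G' H : SimpleGraph V} {k : ℕ}

theorem MarcelloStep.ncard_edgeSet_sdiff_le (h : MarcelloStep G G') :
    (G'.edgeSet \ G.edgeSet).ncard ≤ 2 * G.edgeSet.ncard := by
  obtain ⟨-, initiator, -, -, initiated_le⟩ := h
  calc (G'.edgeSet \ G.edgeSet).ncard
      = (⋃ v, (G'.edgeSet \ G.edgeSet) ∩ {e | initiator e = v}).ncard := by
        congr 1; ext; simp
    _ ≤ ∑ v, ((G'.edgeSet \ G.edgeSet) ∩ {e | initiator e = v}).ncard :=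
        Set.ncard_iUnion_le_of_fintype _
    _ ≤ ∑ v, mdeg G v := Finset.sum_le_sum fun v _ ↦ initiated_le v
    _ = 2 * G.edgeSet.ncard := sum_mdeg_eq_two_mul_ncard_edgeSet G

theorem MarcelloStep.ncard_edgeSet_le (h : MarcelloStep G G') :
    G'.edgeSet.ncard ≤ 3 * G.edgeSet.ncard := by
  have split_new_old := Set.ncard_le_ncard_sdiff_add_ncard G'.edgeSet G.edgeSet
  have new_le := h.ncard_edgeSet_sdiff_le
  omega

theorem MarcelloChain.ncard_edgeSet_le (h : MarcelloChain G H k) :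
    H.edgeSet.ncard ≤ 3 ^ k * G.edgeSet.ncard := by
  obtain ⟨c, rfl, rfl, step⟩ := h
  induction k with
  | zero => simp
  | succ k ih =>
    calc (c (k + 1)).edgeSet.ncard
        ≤ 3 * (c k).edgeSet.ncard := (step k k.lt_succ_self).ncard_edgeSet_le
      _ ≤ 3 * (3 ^ k * (c 0).edgeSet.ncard) := by
          gcongr
          exact ih fun i hi ↦ step i (hi.trans k.lt_succ_self)
      _ = 3 ^ (k + 1) * (c 0).edgeSet.ncard := by ring

theorem MarcelloChain.choose_two_le (h : MarcelloChain G ⊤ k) :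
    (Fintype.card V).choose 2 ≤ 3 ^ k * G.edgeSet.ncard :=
  ncard_edgeSet_top.symm.trans_le h.ncard_edgeSet_le

end EdgeGrowth

theorem marcello_path_union_null_unbounded_general {V : Type*} [Fintype V] (G : SimpleGraph V)
    (k : ℕ) :
    ∀ᶠ m in atTop, ∀ j ≤ k,
      ¬ MarcelloChain (G ⊕g (⊥ : SimpleGraph (Fin m))) (⊤ : SimpleGraph (V ⊕ Fin m)) j := by
  have many_pairs : ∀ᶠ m in atTop,
      3 ^ k * G.edgeSet.ncard < (m + Fintype.card V).choose 2 :=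
    ((tendsto_choose_succ_atTop 1).comp (tendsto_add_atTop_nat _)).eventually_gt_atTop _
  filter_upwards [many_pairs] with m hm j hj chain
  refine hm.not_ge ?_
  calc (m + Fintype.card V).choose 2
      = (Fintype.card (V ⊕ Fin m)).choose 2 := by
        rw [Fintype.card_sum, Fintype.card_fin, add_comm]
    _ ≤ 3 ^ j * (G ⊕g (⊥ : SimpleGraph (Fin m))).edgeSet.ncard := chain.choose_two_le
    _ = 3 ^ j * G.edgeSet.ncard := by rw [ncard_edgeSet_sum_bot]
    _ ≤ 3 ^ k * G.edgeSet.ncard := by gcongr; norm_num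

/-- For fixed `n ≥ 2` and every `k`, there is `m` such that no Marcello chain of length
at most `k` completes `P_n ⊔ N_m`; hence `ϖ(P_n ∪ N_m) → ∞` as `m → ∞`. -/
theorem marcello_path_union_null_unbounded (n : ℕ) (hn : 2 ≤ n) (k : ℕ) :
    ∃ m : ℕ, ∀ j ≤ k,
      ¬ MarcelloChain (SimpleGraph.pathGraph n ⊕g (⊥ : SimpleGraph (Fin m)))
        (⊤ : SimpleGraph (Fin n ⊕ Fin m)) j :=
  (marcello_path_union_null_unbounded_general (SimpleGraph.pathGraph n) k).exists
end
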